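/- Let F be an algebraically closed field of characteristic 0, φ ∈ F(x) of degree d ≥ 2, and α ∈ P¹(F) not φ-preperiodic. Then for all but finitely many m ∈ N, there exists η ∈ P¹(F) with η ≠ φ^{m-1}(α), φ(η) = φ^m(α), φ unramified at η, and φ dynamically unramified over η (η has an infinite backward orbit under φ consisting of points at which the relevant iterates of φ are unramified). -/

import Mathlib

open Polynomial

-- The extension of a rational function `φ ∈ F(x)` to a self-map of `P¹(F) = F ∪ {∞}`.
open scoped Classical in
noncomputable def evalP {F : Type*} [Field F] (φ : RatFunc F) (x : OnePoint F) : OnePoint F :=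
  match x with
  | Option.none =>
      if φ.denom.natDegree < φ.num.natDegree then OnePoint.infty
      else OnePoint.some (φ.num.coeff φ.denom.natDegree / φ.denom.leadingCoeff)
  | Option.some a =>
      if φ.denom.eval a = 0 then OnePoint.infty
      else OnePoint.some (φ.num.eval a / φ.denom.eval a)

-- The ramification index of `φ` at a point of `P¹(F)`.
open scoped Classical in
noncomputable def ramIdx {F : Type*} [Field F] (φ : RatFunc F) (x : OnePoint F) : ℕ :=
  match x with
  | Option.none =>
      if φ.denom.natDegree < φ.num.natDegree then φ.num.natDegree - φ.denom.natDegree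
      else max φ.num.natDegree φ.denom.natDegree -
        (φ.num - Polynomial.C (φ.num.coeff φ.denom.natDegree / φ.denom.leadingCoeff) * φ.denom).natDegree
  | Option.some a =>
      if φ.denom.eval a = 0 then φ.denom.rootMultiplicity a
      else (φ.num - Polynomial.C (φ.num.eval a / φ.denom.eval a) * φ.denom).rootMultiplicity a

lemma dyn_tree {X : Type*} (f : X → X) (E : Set X)
    (hE : ∀ y, y ∉ E → ∃ x x', x ≠ x' ∧ f x = y ∧ f x' = y) (k : ℕ) :
    ∀ z, (∀ i < k, ∀ e ∈ E, f^[i] e ≠ z) →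
      ∃ T : Finset X, T.card = 2 ^ k ∧ ∀ t ∈ T, f^[k] t = z := by
  classical
  induction k with
  | zero => intro z _; exact ⟨{z}, by simp, by simp⟩
  | succ k ih =>
    intro z hz
    obtain ⟨x, x', hne, hx, hx'⟩ := hE z (fun h => hz 0 (by omega) z h rfl)
    have key : ∀ w, f w = z → ∀ i < k, ∀ e ∈ E, f^[i] e ≠ w := by
      intro w hw i hi e he h
      apply hz (i+1) (by omega) e he
      rw [Function.iterate_succ_apply', h, hw]
    obtain ⟨T, hT, hTf⟩ := ih x (key x hx)
    obtain ⟨T', hT', hTf'⟩ := ih x' (key x' hx')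
    refine ⟨T ∪ T', ?_, ?_⟩
    · rw [Finset.card_union_of_disjoint, hT, hT', pow_succ]; · ring
      rw [Finset.disjoint_left]
      intro a ha ha'
      exact hne ((hTf a ha).symm.trans (hTf' a ha'))
    · intro t ht
      rw [Function.iterate_succ_apply']
      rcases Finset.mem_union.1 ht with h | h
      · rw [hTf t h, hx]
      · rw [hTf' t h, hx']

lemma dyn_back {X : Type*} (f : X → X) (E : Set X)
    (hE : ∀ y, y ∉ E → ∃ x, f x = y) (n : ℕ) :
    ∀ z, (∀ i, ∀ e ∈ E, f^[i] e ≠ z) → ∃ b, f^[n] b = z := by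
  induction n with
  | zero => intro z _; exact ⟨z, rfl⟩
  | succ n ih =>
    intro z hz
    obtain ⟨x, hx⟩ := hE z (fun h => hz 0 z h rfl)
    obtain ⟨b, hb⟩ := ih x (fun i e he h => hz (i+1) e he (by
      rw [Function.iterate_succ_apply', h, hx]))
    exact ⟨b, by rw [Function.iterate_succ_apply', hb, hx]⟩

lemma dyn_main {X : Type*} (f : X → X) (R : X → Prop) (E : Set X) (hfin : E.Finite)
    (hR : ∀ x, f x ∉ E → R x)
    (hE : ∀ y, y ∉ E → ∃ x x', x ≠ x' ∧ f x = y ∧ f x' = y)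
    (α : X) (hw : ∀ i j : ℕ, f^[i] α = f^[j] α → i = j) :
    {m : ℕ | 1 ≤ m ∧ ¬ ∃ η, η ≠ f^[m - 1] α ∧ f η = f^[m] α ∧ R η ∧
        {b | ∃ n, f^[n] b = η ∧ ∀ k < n, R (f^[k] b)}.Infinite}.Finite := by
  classical
  obtain ⟨N, hN⟩ : ∃ N, hfin.toFinset.card < 2 ^ N := ⟨_, Nat.lt_two_pow_self⟩
  have hB : (⋃ i ∈ Finset.range (N+2), f^[i] '' E).Finite :=
    Set.Finite.biUnion (Finset.finite_toSet _) (fun i _ => hfin.image _)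
  have hinj : Function.Injective (fun m => f^[m] α) := fun i j h => hw i j h
  refine (hB.preimage (f := fun m => f^[m] α) hinj.injOn).subset ?_
  rintro m ⟨hm1, hm⟩
  by_contra hgood
  apply hm
  have hg : ∀ i < N + 2, ∀ e ∈ E, f^[i] e ≠ f^[m] α := by
    intro i hi e he h
    apply hgood
    simp only [Set.mem_preimage, Set.mem_iUnion, Finset.mem_range]
    exact ⟨i, hi, e, he, h⟩
  have hper : ∀ p, f^[p] (f^[m] α) = f^[m] α → p = 0 := by
    intro p h
    rw [← Function.iterate_add_apply] at h
    have := hw _ _ h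
    omega
  -- common points force equal times
  have hper2 : ∀ x i j, f^[i] x = f^[m] α → f^[j] x = f^[m] α → i = j := by
    have : ∀ x i j, i ≤ j → f^[i] x = f^[m] α → f^[j] x = f^[m] α → i = j := by
      intro x i j hij hi hj
      have : f^[j - i] (f^[i] x) = f^[j] x := by
        rw [← Function.iterate_add_apply]; congr 2; omega
      rw [hi, hj] at this
      have := hper _ this
      omega
    intro x i j hi hj
    rcases le_total i j with h | h
    · exact this x i j h hi hj
    · exact (this x j i h hj hi).symm
  have hyE : f^[m] α ∉ E := fun h => hg 0 (by omega) _ h rfl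
  obtain ⟨η, hη1, hη2⟩ : ∃ η, η ≠ f^[m - 1] α ∧ f η = f^[m] α := by
    obtain ⟨x, x', hne, hx, hx'⟩ := hE _ hyE
    by_cases h : x = f^[m - 1] α
    · exact ⟨x', fun h' => hne (h.trans h'.symm), hx'⟩
    · exact ⟨x, h, hx⟩
  refine ⟨η, hη1, hη2, hR _ (by rwa [hη2]), ?_⟩
  obtain ⟨T, hT, hTf⟩ := dyn_tree f E hE N η (fun i hi e he h => hg (i+1) (by omega) e he (by
    rw [Function.iterate_succ_apply', h, hη2]))
  obtain ⟨ξ, hξT, hξ⟩ : ∃ ξ ∈ T, ∀ i, ∀ e ∈ E, f^[i] e ≠ ξ := by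
    by_contra hcon
    push Not at hcon
    choose! I e heE hIe using hcon
    obtain ⟨t, ht, t', ht', hne, hee⟩ := Finset.exists_ne_map_eq_of_card_lt_of_maps_to
      (s := T) (t := hfin.toFinset) (by rw [hT]; exact hN) (f := e)
      (by intro t ht; simpa using heE t ht)
    apply hne
    have h1 : ∀ t ∈ T, f^[N + 1 + I t] (e t) = f^[m] α := by
      intro t ht
      rw [Function.iterate_add_apply, hIe t ht, Function.iterate_succ_apply', hTf t ht, hη2]
    have h2 := h1 t ht
    have h3 := h1 t' ht'
    rw [← hee] at h3
    have h4 := hper2 _ _ _ h2 h3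
    have h5 : I t = I t' := by omega
    have h6 := hIe t' ht'
    rw [← hee, ← h5] at h6
    exact (hIe t ht).symm.trans h6
  have hback := fun n => dyn_back f E (fun y hy => by
    obtain ⟨x, -, -, hx, -⟩ := hE y hy; exact ⟨x, hx⟩) n ξ hξ
  choose b hb using hback
  have hbη : ∀ n, f^[N + n] (b n) = η := fun n => by
    rw [Function.iterate_add_apply, hb, hTf ξ hξT]
  have hbinj : Function.Injective b := by
    intro n k h
    have h1 : ∀ n, f^[N + n + 1] (b n) = f^[m] α := fun n => by
      rw [Function.iterate_succ_apply', hbη, hη2]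
    have h2 := h1 n
    rw [h] at h2
    have := hper2 _ _ _ h2 (h1 k)
    omega
  refine (Set.infinite_range_of_injective hbinj).mono ?_
  rintro _ ⟨n, rfl⟩
  refine ⟨N + n, hbη n, fun k hk => hR _ ?_⟩
  rw [← Function.iterate_succ_apply' f]
  intro he
  by_cases hkn : k + 1 ≤ n
  · apply hξ (n - (k+1)) _ he
    rw [← Function.iterate_add_apply, ← hb n]
    congr 2; omega
  · apply hg (N + n + 1 - (k + 1)) (by omega) _ he
    rw [← Function.iterate_add_apply, ← hη2, ← hbη n, ← Function.iterate_succ_apply' f]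
    congr 2; omega

section alg
variable {F : Type*} [Field F]

lemma evalP_some (φ : RatFunc F) (a : F) (h : φ.denom.eval a ≠ 0) :
    evalP φ (OnePoint.some a) = OnePoint.some (φ.num.eval a / φ.denom.eval a) :=
  if_neg h

lemma evalP_some_zero (φ : RatFunc F) (a : F) (h : φ.denom.eval a = 0) :
    evalP φ (OnePoint.some a) = OnePoint.infty :=
  if_pos h

lemma ramIdx_some (φ : RatFunc F) (a : F) (h : φ.denom.eval a ≠ 0) :
    ramIdx φ (OnePoint.some a) =
      (φ.num - Polynomial.C (φ.num.eval a / φ.denom.eval a) * φ.denom).rootMultiplicity a :=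
  if_neg h

lemma evalP_infty (φ : RatFunc F) (h : φ.num.natDegree ≤ φ.denom.natDegree) :
    evalP φ OnePoint.infty =
      OnePoint.some (φ.num.coeff φ.denom.natDegree / φ.denom.leadingCoeff) := by
  show (if φ.denom.natDegree < φ.num.natDegree then OnePoint.infty
      else OnePoint.some (φ.num.coeff φ.denom.natDegree / φ.denom.leadingCoeff)) = _
  rw [if_neg (not_lt.2 h)]

noncomputable def wron (φ : RatFunc F) : F[X] :=
  derivative φ.num * φ.denom - φ.num * derivative φ.denom

lemma wron_ne_zero [CharZero F] (φ : RatFunc F)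
    (hdeg : 2 ≤ max φ.num.natDegree φ.denom.natDegree) : wron φ ≠ 0 := by
  intro h
  have h' : derivative φ.num * φ.denom = φ.num * derivative φ.denom := sub_eq_zero.1 h
  have hc := φ.isCoprime_num_denom
  have hq0 := φ.denom_ne_zero
  have hdvd : φ.denom ∣ derivative φ.denom :=
    hc.symm.dvd_of_dvd_mul_left (h' ▸ Dvd.intro_left _ rfl)
  have hq' : derivative φ.denom = 0 := by
    by_contra hne
    have h1 := degree_le_of_dvd hdvd hne
    exact absurd (degree_derivative_lt hq0) (not_lt.2 h1)
  rw [hq', mul_zero] at h'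
  have hp' : derivative φ.num = 0 := (mul_eq_zero.1 h').resolve_right hq0
  have := derivative_eq_zero.1 hq'
  have := derivative_eq_zero.1 hp'
  omega

lemma rootMult_one [CharZero F] (φ : RatFunc F) (a c : F) (hq : φ.denom.eval a ≠ 0)
    (hW : (wron φ).eval a ≠ 0) (hc : φ.num.eval a / φ.denom.eval a = c) :
    (φ.num - Polynomial.C c * φ.denom).rootMultiplicity a = 1 := by
  have hd : (derivative (φ.num - Polynomial.C c * φ.denom)).eval a ≠ 0 := by
    intro h
    apply hW
    rw [div_eq_iff hq] at hc
    simp only [derivative_sub, derivative_mul, derivative_C, zero_mul, zero_add, eval_sub,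
      eval_mul, eval_C] at h
    simp only [wron, eval_sub, eval_mul]
    rw [hc]
    linear_combination (φ.denom.eval a) * h
  have hr : (φ.num - Polynomial.C c * φ.denom).IsRoot a := by
    rw [div_eq_iff hq] at hc
    simp [IsRoot, hc]
  have hne : φ.num - Polynomial.C c * φ.denom ≠ 0 := by
    intro h; apply hd; rw [h]; simp
  apply le_antisymm
  · by_contra hlt
    exact hd ((one_lt_rootMultiplicity_iff_isRoot hne).1 (not_le.1 hlt)).2
  · exact (rootMultiplicity_pos hne).2 hr

lemma deg_fiber (φ : RatFunc F) (c : F)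
    (hc : OnePoint.some c ≠ evalP φ OnePoint.infty)
    (hdeg : 2 ≤ max φ.num.natDegree φ.denom.natDegree) :
    2 ≤ (φ.num - Polynomial.C c * φ.denom).natDegree := by
  rcases lt_or_ge φ.denom.natDegree φ.num.natDegree with h | h
  · rw [natDegree_sub_eq_left_of_natDegree_lt]
    · omega
    · exact (natDegree_C_mul_le _ _).trans_lt h
  · rw [evalP_infty φ h] at hc
    have : 2 ≤ φ.denom.natDegree := by omega
    refine this.trans (le_natDegree_of_ne_zero ?_)
    rw [coeff_sub, coeff_C_mul, coeff_natDegree]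
    intro h0
    apply hc
    congr 1
    rw [eq_div_iff (leadingCoeff_ne_zero.2 φ.denom_ne_zero)]
    linear_combination -h0

end alg

/-- For `φ` of degree `d ≥ 2` over an algebraically closed field `F` of characteristic 0
and a non-preperiodic `α ∈ P¹(F)`, for all but finitely many `m ≥ 1` there exists
`η ≠ φ^{m-1}(α)` with `φ(η) = φ^m(α)`, `φ` unramified at `η`, and `φ` dynamically
unramified over `η` (infinitely many unramified backward iterated preimages). -/
theorem stmt_6 (F : Type*) [Field F] [IsAlgClosed F] [CharZero F]
    (φ : RatFunc F) (d : ℕ) (hd : 2 ≤ d)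
    (hdeg : max φ.num.natDegree φ.denom.natDegree = d)
    (α : OnePoint F)
    (hwander : ∀ i j : ℕ, (evalP φ)^[i] α = (evalP φ)^[j] α → i = j) :
    {m : ℕ | 1 ≤ m ∧ ¬ ∃ η : OnePoint F,
        η ≠ (evalP φ)^[m - 1] α ∧
        evalP φ η = (evalP φ)^[m] α ∧
        ramIdx φ η = 1 ∧
        {b : OnePoint F | ∃ n, (evalP φ)^[n] b = η ∧
            ∀ k < n, ramIdx φ ((evalP φ)^[k] b) = 1}.Infinite}.Finite := by
  classical
  subst hdeg
  let E : Set (OnePoint F) := {OnePoint.infty, evalP φ OnePoint.infty} ∪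
    (fun a => evalP φ (OnePoint.some a)) '' {a | (wron φ).IsRoot a}
  have hEfin : E.Finite := by
    refine Set.Finite.union (by simp) (Set.Finite.image _ ?_)
    exact finite_setOfPred_isRoot (wron_ne_zero φ hd)
  have hinf : OnePoint.infty ∈ E := Or.inl (Or.inl rfl)
  refine dyn_main (evalP φ) (fun x => ramIdx φ x = 1) E hEfin ?_ ?_ α hwander
  · intro x hx
    induction x using OnePoint.rec with
    | infty => exact absurd (Or.inl (Or.inr rfl)) hx
    | coe a =>
      have hq : φ.denom.eval a ≠ 0 := fun h => hx (by
        rw [show ((a : OnePoint F)) = OnePoint.some a from rfl, evalP_some_zero φ a h]; exact hinf)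
      have hW : (wron φ).eval a ≠ 0 := fun h => hx (Or.inr ⟨a, h, rfl⟩)
      exact (ramIdx_some φ a hq).trans (rootMult_one φ a _ hq hW rfl)
  · intro y hy
    induction y using OnePoint.rec with
    | infty => exact absurd hinf hy
    | coe c =>
      have hcinf : OnePoint.some c ≠ evalP φ OnePoint.infty := fun h => hy (Or.inl (Or.inr h))
      have hdg := deg_fiber φ c hcinf hd
      set P := φ.num - Polynomial.C c * φ.denom with hP
      have hP0 : P ≠ 0 := by intro h; rw [h] at hdg; simp at hdg
      have hroot : ∀ a, P.IsRoot a → φ.denom.eval a ≠ 0 ∧ φ.num.eval a / φ.denom.eval a = c := by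
        intro a ha
        have ha' : φ.num.eval a - c * φ.denom.eval a = 0 := by simpa [IsRoot, hP] using ha
        have hq : φ.denom.eval a ≠ 0 := by
          intro hq
          obtain ⟨u, v, huv⟩ := φ.isCoprime_num_denom
          have := congrArg (eval a) huv
          rw [hq, mul_zero, sub_zero] at ha'
          simp [hq, ha'] at this
        exact ⟨hq, by rw [div_eq_iff hq]; linear_combination ha'⟩
      have hroot' : ∀ a, P.IsRoot a → evalP φ (OnePoint.some a) = OnePoint.some c := fun a ha => by
        rw [evalP_some φ a (hroot a ha).1, (hroot a ha).2]
      have hnd : P.roots.Nodup := by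
        classical
        rw [Multiset.nodup_iff_count_le_one]
        intro a
        rw [count_roots]
        by_cases ha : P.IsRoot a
        · refine (rootMult_one φ a c (hroot a ha).1 ?_ (hroot a ha).2).le
          intro h
          exact hy (Or.inr ⟨a, h, hroot' a ha⟩)
        · rw [rootMultiplicity_eq_zero ha]; omega
      have hcard : 1 < P.roots.toFinset.card := by
        classical
        rw [Multiset.toFinset_card_of_nodup hnd, IsAlgClosed.card_roots_eq_natDegree]
        omega
      obtain ⟨a, ha, b, hb, hab⟩ := Finset.one_lt_card.1 hcard
      have ha' := isRoot_of_mem_roots (Multiset.mem_toFinset.1 ha)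
      have hb' := isRoot_of_mem_roots (Multiset.mem_toFinset.1 hb)
      exact ⟨OnePoint.some a, OnePoint.some b, fun h => hab (OnePoint.coe_injective h),
        hroot' a ha', hroot' b hb'⟩
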